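/- Two bow-free acyclic path diagrams G and G' on the same finite vertex type V are distributionally equivalent up to closure if and only if they are algebraically equivalent: the Euclidean closures of M(G) and M(G') in Matrix V V ℝ are equal if and only if A(G) = A(G'). (The consequence stated immediately after Theorem 4.) -/

import Mathlib

open Matrix

structure MixedGraph (V : Type*) where
  D : V → V → Prop
  B : V → V → Prop
  symm : ∀ v w, B v w → B w v
  irrefl : ∀ v, ¬ B v v

namespace MixedGraph

variable {V : Type*}

/-- The graph is acyclic: no directed cycles. -/
def Acyclic (G : MixedGraph V) : Prop := ∀ v, ¬ Relation.TransGen G.D v v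

/-- The graph is simple: for distinct `v, w`, at most one of
`D v w`, `D w v`, `B v w` holds. -/
def Simple (G : MixedGraph V) : Prop :=
  ∀ v w, v ≠ w →
    ¬ (G.D v w ∧ G.D w v) ∧ ¬ (G.D v w ∧ G.B v w) ∧ ¬ (G.D w v ∧ G.B v w)

/-- A bow-free acyclic path diagram: a simple acyclic mixed graph. -/
def IsBAP (G : MixedGraph V) : Prop := G.Acyclic ∧ G.Simple

/-- `Λ` is compatible with `G`. -/
def LamCompat (G : MixedGraph V) (Λ : Matrix V V ℝ) : Prop :=
  ∀ v w, ¬ G.D v w → Λ v w = 0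

/-- `Ω` is compatible with `G`. -/
def OmCompat [Fintype V] (G : MixedGraph V) (Ω : Matrix V V ℝ) : Prop :=
  Ω.PosDef ∧ ∀ v w, v ≠ w → ¬ G.B v w → ¬ G.B w v → Ω v w = 0

/-- The model `M(G)` of a mixed graph. -/
def model [Fintype V] [DecidableEq V] (G : MixedGraph V) : Set (Matrix V V ℝ) :=
  {S | ∃ Λ Ω : Matrix V V ℝ, G.LamCompat Λ ∧ G.OmCompat Ω ∧
    S = ((1 - Λ)⁻¹)ᵀ * Ω * (1 - Λ)⁻¹}

/-- The algebraic model `A(G)`: the real Zariski closure of `M(G)`. -/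
def algModel [Fintype V] [DecidableEq V] (G : MixedGraph V) : Set (Matrix V V ℝ) :=
  {S | ∀ p : MvPolynomial (V × V) ℝ,
    (∀ T ∈ G.model, MvPolynomial.eval (fun e => T e.1 e.2) p = 0) →
    MvPolynomial.eval (fun e => S e.1 e.2) p = 0}

/-- The skeleton (adjacency relation) of `G`. -/
def adj (G : MixedGraph V) (v w : V) : Prop :=
  v ≠ w ∧ (G.D v w ∨ G.D w v ∨ G.B v w)

/-- A collider triple of `G`. -/
def ColliderTriple (G : MixedGraph V) (u v w : V) : Prop :=
  u ≠ v ∧ v ≠ w ∧ u ≠ w ∧ (G.D u v ∨ G.B u v) ∧ (G.D w v ∨ G.B w v)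

/-- A v-structure of `G`. -/
def VStructure (G : MixedGraph V) (u v w : V) : Prop :=
  G.ColliderTriple u v w ∧ ¬ G.adj u w

end MixedGraph

/-!
Bow-freeness makes `Λ` identifiable from `Σ` near the identity: processing the vertices along the
acyclic order, the coefficients on the edges into `w` solve a linear system whose entries involve
`Σ` and the coefficients on the edges into the parents of `w`, and whose matrix is the identity at
`Σ = 1`. By Cramer's rule `Λ = N(Σ) / q(Σ)` on `M(G)` for polynomials `q`, `N` with `q(1) ≠ 0`. The
polynomial relations that this fraction satisfies on `M(G)` persist on `A(G)`, so every positive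
definite point of `A(G)` with `q ≠ 0` already lies in `M(G)`.

If `A(G) ⊆ A(G')`, it remains to see that `{q' ≠ 0}` is dense in `M(G)`. Every point of `M(G)` is
joined to the identity by the analytic path in `M(G)` with parameters `(t Λ, (1 - t) 1 + t Ω)`,
along which `q'` has isolated zeros because `q'(1) ≠ 0`.
-/

section Fractions

variable {R : Type*} [CommRing R]

/-- The fractions in `R` with numerator in the subring `P` and denominator in `P ∩ M`. An element
`f` counts as the fraction `p / q` as soon as `q * f = p`, so that denominators need not be
invertible in `R`: for functions, this allows denominators with zeros. -/
def fractionSubring (P : Subring R) (M : Submonoid R) : Subring R where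
  carrier := {f | ∃ q ∈ P, q ∈ M ∧ q * f ∈ P}
  zero_mem' := ⟨1, one_mem P, one_mem M, by simp⟩
  one_mem' := ⟨1, one_mem P, one_mem M, by simp⟩
  add_mem' := by
    rintro f g ⟨q, hqP, hqM, hf⟩ ⟨r, hrP, hrM, hg⟩
    refine ⟨q * r, mul_mem hqP hrP, mul_mem hqM hrM, ?_⟩
    rw [show q * r * (f + g) = r * (q * f) + q * (r * g) by ring]
    exact add_mem (mul_mem hrP hf) (mul_mem hqP hg)
  mul_mem' := by
    rintro f g ⟨q, hqP, hqM, hf⟩ ⟨r, hrP, hrM, hg⟩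
    refine ⟨q * r, mul_mem hqP hrP, mul_mem hqM hrM, ?_⟩
    rw [mul_mul_mul_comm]
    exact mul_mem hf hg
  neg_mem' := by
    rintro f ⟨q, hqP, hqM, hf⟩
    refine ⟨q, hqP, hqM, ?_⟩
    rw [mul_neg]
    exact neg_mem hf

theorem matrix_det_mem {S n : Type*} [SetLike S R] [SubringClass S R] [Fintype n] [DecidableEq n]
    {P : S} {A : Matrix n n R} (hA : ∀ i j, A i j ∈ P) : A.det ∈ P := by
  rw [Matrix.det_apply]
  exact sum_mem fun σ _ => zsmul_mem (prod_mem fun i _ => hA _ _) _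

namespace fractionSubring

variable {P : Subring R} {M : Submonoid R}

theorem mem_of_mem {f : R} (hf : f ∈ P) : f ∈ fractionSubring P M :=
  ⟨1, one_mem P, one_mem M, by rwa [one_mul]⟩

theorem mem_of_mul_mem {f g : R} (hg : g ∈ fractionSubring P M) (hgM : g ∈ M)
    (hgf : g * f ∈ fractionSubring P M) : f ∈ fractionSubring P M := by
  obtain ⟨q, hqP, hqM, hqg⟩ := hg
  obtain ⟨r, hrP, hrM, hrgf⟩ := hgf
  refine ⟨r * (q * g), mul_mem hrP hqg, mul_mem hrM (mul_mem hqM hgM), ?_⟩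
  rw [show r * (q * g) * f = q * (r * (g * f)) by ring]
  exact mul_mem hqP hrgf

theorem mem_of_mulVec_mem {n : Type*} [Fintype n] [DecidableEq n] {A : Matrix n n R} {f : n → R}
    (hA : ∀ i j, A i j ∈ fractionSubring P M) (hdet : A.det ∈ M)
    (hAf : ∀ i, (A *ᵥ f) i ∈ fractionSubring P M) (i : n) : f i ∈ fractionSubring P M := by
  have cramer_rule : A.det * f i = (A.updateCol i (A *ᵥ f)).det := by
    rw [← Matrix.cramer_apply, Matrix.cramer_eq_adjugate_mulVec, Matrix.mulVec_mulVec,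
      Matrix.adjugate_mul, Matrix.smul_mulVec, Matrix.one_mulVec, Pi.smul_apply, smul_eq_mul]
  refine mem_of_mul_mem (matrix_det_mem hA) hdet ?_
  rw [cramer_rule]
  refine matrix_det_mem fun j k => ?_
  rw [Matrix.updateCol_apply]
  split_ifs
  exacts [hAf j, hA j k]

theorem exists_common_denominator {ι : Type*} [Finite ι] {f : ι → R}
    (hf : ∀ i, f i ∈ fractionSubring P M) : ∃ q ∈ P, q ∈ M ∧ ∀ i, q * f i ∈ P := by
  classical
  have := Fintype.ofFinite ι
  choose q hqP hqM hqf using hf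
  refine ⟨∏ i, q i, prod_mem fun i _ => hqP i, prod_mem fun i _ => hqM i, fun i => ?_⟩
  rw [← Finset.prod_erase_mul _ _ (Finset.mem_univ i), mul_assoc]
  exact mul_mem (prod_mem fun j _ => hqP j) (hqf i)

end fractionSubring

end Fractions

section AcyclicSupport

variable {n : Type*} [Fintype n] [DecidableEq n]

theorem le_ncard_transGen_of_pow_apply_ne_zero {R : Type*} [Semiring R] {r : n → n → Prop}
    (hr : ∀ i, ¬ Relation.TransGen r i i) {A : Matrix n n R} (hA : ∀ i j, ¬ r i j → A i j = 0)
    {k : ℕ} {i j : n} (hk : (A ^ k) i j ≠ 0) : k ≤ {l | Relation.TransGen r i l}.ncard := by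
  induction k generalizing i with
  | zero => exact Nat.zero_le _
  | succ k ih =>
    rw [pow_succ', Matrix.mul_apply] at hk
    obtain ⟨l, -, hl⟩ := Finset.exists_ne_zero_of_sum_ne_zero hk
    have hil : r i l := not_imp_comm.1 (hA i l) (left_ne_zero_of_mul hl)
    refine (ih (right_ne_zero_of_mul hl)).trans_lt (Set.ncard_lt_ncard ?_)
    exact ⟨fun m hm => .head hil hm, fun hsub => hr l (hsub (.single hil))⟩

theorem isNilpotent_of_acyclic_support {R : Type*} [Semiring R] {r : n → n → Prop}
    (hr : ∀ i, ¬ Relation.TransGen r i i) {A : Matrix n n R} (hA : ∀ i j, ¬ r i j → A i j = 0) :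
    IsNilpotent A := by
  refine ⟨Nat.card n, Matrix.ext fun i j => not_not.1 fun hij => ?_⟩
  refine (le_ncard_transGen_of_pow_apply_ne_zero hr hA hij).not_gt (Set.ncard_lt_card fun h => ?_)
  exact hr i (h ▸ Set.mem_univ i : i ∈ {l | Relation.TransGen r i l})

end AcyclicSupport

theorem posDef_transpose_mul_mul_iff {n : Type*} [Fintype n] [DecidableEq n]
    {U S : Matrix n n ℝ} (hU : IsUnit U) : (Uᵀ * S * U).PosDef ↔ S.PosDef := by
  rw [← Matrix.conjTranspose_eq_transpose_of_trivial, ← Matrix.star_eq_conjTranspose]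
  exact Matrix.IsUnit.posDef_star_left_conjugate_iff hU

/-- The ring homomorphism evaluating polynomials in the entries of a matrix at the matrix `S`. -/
noncomputable abbrev evalEntries {m n R : Type*} [CommSemiring R] (S : Matrix m n R) :
    MvPolynomial (m × n) R →+* R :=
  MvPolynomial.eval fun e => S e.1 e.2

-- With `Λ = N / q`, this clears the denominators in the noise covariance.
theorem evalEntries_transpose_mul_mul_of_smul_eq {n R : Type*} [Fintype n] [DecidableEq n]
    [CommRing R] {q : MvPolynomial (n × n) R} {N : Matrix n n (MvPolynomial (n × n) R)}
    {S Λ : Matrix n n R} (h : evalEntries S q • Λ = (evalEntries S).mapMatrix N) :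
    (evalEntries S).mapMatrix ((q • 1 - N)ᵀ * Matrix.mvPolynomialX n n R * (q • 1 - N)) =
      evalEntries S q ^ 2 • ((1 - Λ)ᵀ * S * (1 - Λ)) := by
  have hone_sub : (evalEntries S).mapMatrix (q • 1 - N) = evalEntries S q • (1 - Λ) := by
    rw [map_sub, ← h, smul_sub]
    congr 1
    ext v w
    simp [Matrix.one_apply, apply_ite (evalEntries S)]
  rw [map_mul, map_mul, Matrix.mvPolynomialX_mapMatrix_eval, hone_sub, RingHom.mapMatrix_apply,
    Matrix.transpose_map, ← RingHom.mapMatrix_apply, hone_sub, Matrix.transpose_smul,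
    Matrix.smul_mul, Matrix.smul_mul, Matrix.mul_smul, smul_smul, sq]

section Analytic

variable {𝕜 : Type*} [NontriviallyNormedField 𝕜]

theorem analyticAt_matrix_mul_apply {l m n : Type*} [Fintype m] {A : 𝕜 → Matrix l m 𝕜}
    {B : 𝕜 → Matrix m n 𝕜} {t : 𝕜} (hA : ∀ i j, AnalyticAt 𝕜 (fun s => A s i j) t)
    (hB : ∀ i j, AnalyticAt 𝕜 (fun s => B s i j) t) (i : l) (j : n) :
    AnalyticAt 𝕜 (fun s => (A s * B s) i j) t := by
  simp only [Matrix.mul_apply]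
  fun_prop

theorem analyticAt_inv_one_sub_smul_apply {n : Type*} [Fintype n] [DecidableEq n]
    {A : Matrix n n 𝕜} (hA : IsNilpotent A) (i j : n) (t : 𝕜) :
    AnalyticAt 𝕜 (fun s : 𝕜 => (1 - s • A)⁻¹ i j) t := by
  obtain ⟨k, hk⟩ := hA
  have inv_eq_geom_sum (s : 𝕜) : (1 - s • A)⁻¹ = ∑ m ∈ Finset.range k, (s • A) ^ m := by
    refine Matrix.inv_eq_right_inv ?_
    rw [mul_neg_geom_sum, smul_pow, hk, smul_zero, sub_zero]
  simp_rw [inv_eq_geom_sum, smul_pow, Matrix.sum_apply, Matrix.smul_apply, smul_eq_mul]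
  fun_prop

theorem analyticAt_evalEntries_comp {m n : Type*} {A : 𝕜 → Matrix m n 𝕜} {t : 𝕜}
    (hA : ∀ i j, AnalyticAt 𝕜 (fun s => A s i j) t) (p : MvPolynomial (m × n) 𝕜) :
    AnalyticAt 𝕜 (fun s => evalEntries (A s) p) t :=
  AnalyticAt.aeval_mvPolynomial (f := fun s (e : m × n) => A s e.1 e.2) (fun e => hA e.1 e.2) p

theorem mem_closure_ne_zero_of_analytic_path {E F : Type*} [TopologicalSpace E]
    [NormedAddCommGroup F] [NormedSpace ℝ F] {s : Set E} {f : E → F} {γ : ℝ → E} {a b : ℝ}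
    (hab : a < b) (hγ : ContinuousAt γ b) (hs : ∀ t ∈ Set.Ioo a b, γ t ∈ s)
    (hf : AnalyticOnNhd ℝ (f ∘ γ) (Set.Icc a b)) (ha : f (γ a) ≠ 0) :
    γ b ∈ closure {x ∈ s | f x ≠ 0} := by
  have hne : ∀ᶠ t in nhdsWithin b {b}ᶜ, f (γ t) ≠ 0 := by
    by_contra hfreq
    exact ha (hf.eqOn_zero_of_preconnected_of_frequently_eq_zero isPreconnected_Icc
      (Set.right_mem_Icc.2 hab.le) hfreq (Set.left_mem_Icc.2 hab.le))
  refine mem_closure_of_tendsto (hγ.mono_left (nhdsWithin_le_nhds (s := Set.Iio b))) ?_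
  filter_upwards [nhdsLT_le_nhdsNE b hne, Ioo_mem_nhdsLT hab] with t ht htab
  exact ⟨hs t htab, ht⟩

end Analytic

namespace MixedGraph

variable {V : Type*} {G : MixedGraph V}

theorem Acyclic.wellFounded [Finite V] (hG : G.Acyclic) : WellFounded G.D :=
  have : Std.Irrefl (Relation.TransGen G.D) := ⟨hG⟩
  Subrelation.wf Relation.TransGen.single
    (Finite.wellFounded_of_trans_of_irrefl (Relation.TransGen G.D))

theorem Acyclic.ne_of_edge (hG : G.Acyclic) {v w : V} (hvw : G.D v w) : v ≠ w := by
  rintro rfl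
  exact hG v (.single hvw)

theorem IsBAP.not_bidirected_of_directed (hG : G.IsBAP) {v w : V} (hvw : G.D v w) : ¬ G.B v w :=
  fun hB => (hG.2 v w (hG.1.ne_of_edge hvw)).2.1 ⟨hvw, hB⟩

theorem LamCompat.smul {Λ : Matrix V V ℝ} (hΛ : G.LamCompat Λ) (c : ℝ) : G.LamCompat (c • Λ) :=
  fun v w hvw => by rw [Matrix.smul_apply, hΛ v w hvw, smul_zero]

variable [Fintype V]

theorem OmCompat.add {Ω Ω' : Matrix V V ℝ} (hΩ : G.OmCompat Ω) (hΩ' : G.OmCompat Ω') :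
    G.OmCompat (Ω + Ω') :=
  ⟨hΩ.1.add hΩ'.1, fun v w hvw hB hB' => by
    rw [Matrix.add_apply, hΩ.2 v w hvw hB hB', hΩ'.2 v w hvw hB hB', add_zero]⟩

theorem OmCompat.smul {Ω : Matrix V V ℝ} (hΩ : G.OmCompat Ω) {c : ℝ} (hc : 0 < c) :
    G.OmCompat (c • Ω) :=
  ⟨hΩ.1.smul hc, fun v w hvw hB hB' => by
    rw [Matrix.smul_apply, hΩ.2 v w hvw hB hB', smul_zero]⟩

variable [DecidableEq V]

theorem omCompat_one : G.OmCompat (1 : Matrix V V ℝ) :=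
  ⟨Matrix.PosDef.one, fun _ _ hvw _ _ => Matrix.one_apply_ne hvw⟩

theorem LamCompat.isNilpotent {Λ : Matrix V V ℝ} (hΛ : G.LamCompat Λ) (hG : G.Acyclic) :
    IsNilpotent Λ :=
  isNilpotent_of_acyclic_support hG hΛ

theorem LamCompat.isUnit_one_sub {Λ : Matrix V V ℝ} (hΛ : G.LamCompat Λ) (hG : G.Acyclic) :
    IsUnit (1 - Λ) :=
  (hΛ.isNilpotent hG).isUnit_one_sub

variable (G) in
/-- A covariance matrix `cov` together with edge coefficients `coeff` exhibiting it as a member of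
the model of `G`. The noise covariance `Ω` of the paper is recovered as
`(1 - coeff)ᵀ * cov * (1 - coeff)`, which keeps the inverse of `1 - coeff` out of the picture. -/
structure Realization where
  cov : Matrix V V ℝ
  coeff : Matrix V V ℝ
  lamCompat : G.LamCompat coeff
  omCompat : G.OmCompat ((1 - coeff)ᵀ * cov * (1 - coeff))

namespace Realization

variable (G) in
/-- The realization of the identity matrix with all edge coefficients zero. -/
def one : G.Realization where
  cov := 1
  coeff := 0
  lamCompat _ _ _ := rfl
  omCompat := by simpa using omCompat_one

theorem cov_posDef (x : G.Realization) (hG : G.Acyclic) : x.cov.PosDef :=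
  (posDef_transpose_mul_mul_iff (x.lamCompat.isUnit_one_sub hG)).1 x.omCompat.1

/-- The cross-covariance matrix between the noise variables `(1 - coeff)ᵀ X` and the variables
`X`. Its entries are the coefficients of the linear systems determining `coeff`. -/
def crossCov (x : G.Realization) : Matrix V V ℝ := (1 - x.coeff)ᵀ * x.cov

theorem crossCov_mul_coeff_apply (x : G.Realization) (hG : G.IsBAP) {v w : V} (hvw : G.D v w) :
    (x.crossCov * x.coeff) v w = x.crossCov v w := by
  have hB := hG.not_bidirected_of_directed hvw
  have hzero := x.omCompat.2 v w (hG.1.ne_of_edge hvw) hB fun h => hB (G.symm _ _ h)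
  rw [← crossCov, mul_sub, mul_one, Matrix.sub_apply, sub_eq_zero] at hzero
  exact hzero.symm

end Realization

theorem mem_model_iff (hG : G.Acyclic) {S : Matrix V V ℝ} :
    S ∈ G.model ↔ ∃ x : G.Realization, x.cov = S := by
  constructor
  · rintro ⟨Λ, Ω, hΛ, hΩ, rfl⟩
    have hdet := (Matrix.isUnit_iff_isUnit_det _).1 (hΛ.isUnit_one_sub hG)
    refine ⟨⟨_, Λ, hΛ, ?_⟩, rfl⟩
    rwa [← mul_assoc, ← mul_assoc, ← Matrix.transpose_mul,
      Matrix.nonsing_inv_mul_cancel_right _ _ hdet, Matrix.nonsing_inv_mul _ hdet,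
      Matrix.transpose_one, one_mul]
  · rintro ⟨x, rfl⟩
    have hdet := (Matrix.isUnit_iff_isUnit_det _).1 (x.lamCompat.isUnit_one_sub hG)
    refine ⟨x.coeff, _, x.lamCompat, x.omCompat, ?_⟩
    rw [← mul_assoc, ← mul_assoc, ← Matrix.transpose_mul,
      Matrix.mul_nonsing_inv_cancel_right _ _ hdet, Matrix.mul_nonsing_inv _ hdet,
      Matrix.transpose_one, one_mul]

section Identifiability

variable (G) in
/-- The functions on the realizations of `G` that are polynomials in the entries of the covariance
matrix. -/
noncomputable def polynomialFunctions : Subring (G.Realization → ℝ) :=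
  (RingHom.pi fun x : G.Realization => evalEntries x.cov).range

variable (G) in
/-- The functions on the realizations of `G` that are rational functions of the covariance matrix
with a denominator that does not vanish at the identity matrix. -/
noncomputable def regularFunctions : Subring (G.Realization → ℝ) :=
  fractionSubring G.polynomialFunctions
    ((nonZeroDivisors ℝ).comap (Pi.evalRingHom _ (Realization.one G)))

theorem cov_mem_regularFunctions (v w : V) :
    (fun x : G.Realization => x.cov v w) ∈ G.regularFunctions :=
  fractionSubring.mem_of_mem ⟨MvPolynomial.X (v, w), funext fun _ => MvPolynomial.eval_X _⟩

theorem crossCov_mem_regularFunctions {v : V}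
    (hv : ∀ u, (fun x : G.Realization => x.coeff u v) ∈ G.regularFunctions) (w : V) :
    (fun x : G.Realization => x.crossCov v w) ∈ G.regularFunctions := by
  have hexpand : (fun x : G.Realization => x.crossCov v w) =
      (fun x => x.cov v w) - ∑ u, (fun x => x.coeff u v) * fun x => x.cov u w := by
    ext x
    rw [Realization.crossCov, Matrix.transpose_sub, Matrix.transpose_one, sub_mul, one_mul]
    simp [Matrix.mul_apply]
  rw [hexpand]
  exact sub_mem (cov_mem_regularFunctions v w)
    (sum_mem fun u _ => mul_mem (hv u) (cov_mem_regularFunctions u w))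

theorem coeff_mem_regularFunctions (hG : G.IsBAP) (u w : V) :
    (fun x : G.Realization => x.coeff u w) ∈ G.regularFunctions := by
  classical
  induction w using hG.1.wellFounded.induction generalizing u with
  | _ w ih =>
  by_cases huw : G.D u w
  swap
  · rw [show (fun x : G.Realization => x.coeff u w) = 0 from funext fun x => x.lamCompat u w huw]
    exact zero_mem _
  let A : Matrix {v // G.D v w} {v // G.D v w} (G.Realization → ℝ) :=
    Matrix.of fun v u x => x.crossCov v u
  have hA_mem (v : {v // G.D v w}) := crossCov_mem_regularFunctions (ih v v.2)
  have hA_one : A.map (Pi.evalRingHom _ (Realization.one G)) = 1 := by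
    ext v u
    simp [A, Realization.crossCov, Realization.one, Matrix.one_apply, Subtype.ext_iff]
  have hA_mulVec : A *ᵥ (fun v x => x.coeff v w) =
      fun (v : {v // G.D v w}) x => x.crossCov v w := by
    ext v x
    have hzero : ∑ y : {y // ¬ G.D y w}, x.crossCov v y * x.coeff y w = 0 :=
      Finset.sum_eq_zero fun y _ => by rw [x.lamCompat y w y.2, mul_zero]
    rw [← x.crossCov_mul_coeff_apply hG v.2, Matrix.mul_apply,
      ← Fintype.sum_subtype_add_sum_subtype (G.D · w), hzero, add_zero]
    simp [A, Matrix.mulVec, dotProduct]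
  refine fractionSubring.mem_of_mulVec_mem (A := A) (f := fun v x => x.coeff v w)
    (fun v u => hA_mem v u) ?_ (fun v => hA_mulVec ▸ hA_mem v w) ⟨u, huw⟩
  rw [Submonoid.mem_comap, RingHom.map_det, RingHom.mapMatrix_apply, hA_one, Matrix.det_one]
  exact one_mem _

theorem exists_coeff_eq_div (hG : G.IsBAP) :
    ∃ (q : MvPolynomial (V × V) ℝ) (N : Matrix V V (MvPolynomial (V × V) ℝ)),
      evalEntries 1 q ≠ 0 ∧
        ∀ x : G.Realization, evalEntries x.cov q • x.coeff = (evalEntries x.cov).mapMatrix N := by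
  obtain ⟨_, ⟨q, rfl⟩, hq, hmem⟩ := fractionSubring.exists_common_denominator
    fun e : V × V => coeff_mem_regularFunctions hG e.1 e.2
  choose N hN using hmem
  refine ⟨q, Matrix.of fun u w => N (u, w), mem_nonZeroDivisors_iff_ne_zero.1 hq, fun x => ?_⟩
  ext u w
  exact (congrFun (hN (u, w)) x).symm

end Identifiability

theorem exists_denominator_mem_model_of_mem_algModel (hG : G.IsBAP) :
    ∃ q : MvPolynomial (V × V) ℝ, evalEntries 1 q ≠ 0 ∧
      ∀ S ∈ G.algModel, S.PosDef → evalEntries S q ≠ 0 → S ∈ G.model := by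
  obtain ⟨q, N, hq_one, hN⟩ := exists_coeff_eq_div hG
  refine ⟨q, hq_one, fun S hS hpos hq => ?_⟩
  have eval_eq_zero {p : MvPolynomial (V × V) ℝ}
      (hp : ∀ x : G.Realization, evalEntries x.cov p = 0) : evalEntries S p = 0 := by
    refine hS p fun T hT => ?_
    obtain ⟨x, rfl⟩ := (mem_model_iff hG.1).1 hT
    exact hp x
  let Λ := (evalEntries S q)⁻¹ • (evalEntries S).mapMatrix N
  have hΛ : G.LamCompat Λ := by
    intro v w hvw
    have hNvw : evalEntries S (N v w) = 0 := eval_eq_zero fun x => by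
      simpa [x.lamCompat v w hvw] using (congrFun₂ (hN x) v w).symm
    simp [Λ, hNvw]
  have hΩ (v w : V) (hne : v ≠ w) (hB : ¬ G.B v w) (hB' : ¬ G.B w v) :
      ((1 - Λ)ᵀ * S * (1 - Λ) : Matrix V V ℝ) v w = 0 := by
    have hnum := eval_eq_zero fun x =>
      (congrFun₂ (evalEntries_transpose_mul_mul_of_smul_eq (hN x)) v w).trans <| by
        rw [Matrix.smul_apply, x.omCompat.2 v w hne hB hB', smul_zero]
    have hscaled := congrFun₂ (evalEntries_transpose_mul_mul_of_smul_eq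
      (smul_inv_smul₀ hq ((evalEntries S).mapMatrix N))) v w
    exact (smul_eq_zero.1 (hscaled.symm.trans hnum)).resolve_left (pow_ne_zero 2 hq)
  exact (mem_model_iff hG.1).2 ⟨⟨S, Λ, hΛ,
    (posDef_transpose_mul_mul_iff (hΛ.isUnit_one_sub hG.1)).2 hpos, hΩ⟩, rfl⟩

/-- A path of covariance matrices from the identity at `t = 0` to the member of the model with
parameters `Λ`, `Ω` at `t = 1`. -/
noncomputable def covPath (Λ Ω : Matrix V V ℝ) (t : ℝ) : Matrix V V ℝ :=
  ((1 - t • Λ)⁻¹)ᵀ * ((1 - t) • 1 + t • Ω) * (1 - t • Λ)⁻¹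

theorem covPath_zero (Λ Ω : Matrix V V ℝ) : covPath Λ Ω 0 = 1 := by simp [covPath]

theorem covPath_one (Λ Ω : Matrix V V ℝ) : covPath Λ Ω 1 = ((1 - Λ)⁻¹)ᵀ * Ω * (1 - Λ)⁻¹ := by
  simp [covPath]

theorem covPath_mem_model {Λ Ω : Matrix V V ℝ} (hΛ : G.LamCompat Λ) (hΩ : G.OmCompat Ω) {t : ℝ}
    (ht : t ∈ Set.Ioo 0 1) : covPath Λ Ω t ∈ G.model :=
  ⟨t • Λ, _, hΛ.smul t, (omCompat_one.smul (sub_pos.2 ht.2)).add (hΩ.smul ht.1), rfl⟩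

theorem analyticAt_covPath_apply {Λ : Matrix V V ℝ} (hΛ : IsNilpotent Λ) (Ω : Matrix V V ℝ)
    (v w : V) (t : ℝ) : AnalyticAt ℝ (fun s => covPath Λ Ω s v w) t := by
  have hinv := analyticAt_inv_one_sub_smul_apply hΛ
  have hnoise (i j : V) : AnalyticAt ℝ (fun s : ℝ => ((1 - s) • 1 + s • Ω) i j) t := by
    simp only [Matrix.add_apply, Matrix.smul_apply, smul_eq_mul]
    fun_prop
  exact analyticAt_matrix_mul_apply
    (analyticAt_matrix_mul_apply (A := fun s => ((1 - s • Λ)⁻¹)ᵀ) (fun i j => hinv j i t) hnoise)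
    (fun i j => hinv i j t) v w

theorem continuous_covPath {Λ : Matrix V V ℝ} (hΛ : IsNilpotent Λ) (Ω : Matrix V V ℝ) :
    Continuous (covPath Λ Ω) :=
  continuous_matrix fun v w => continuous_iff_continuousAt.2 fun t =>
    (analyticAt_covPath_apply hΛ Ω v w t).continuousAt

theorem mem_closure_model_evalEntries_ne_zero (hG : G.Acyclic) {q : MvPolynomial (V × V) ℝ}
    (hq : evalEntries 1 q ≠ 0) {S : Matrix V V ℝ} (hS : S ∈ G.model) :
    S ∈ closure {T ∈ G.model | evalEntries T q ≠ 0} := by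
  obtain ⟨Λ, Ω, hΛ, hΩ, rfl⟩ := hS
  have hnil := hΛ.isNilpotent hG
  have hanalytic : AnalyticOnNhd ℝ ((evalEntries · q) ∘ covPath Λ Ω) (Set.Icc 0 1) := fun t _ =>
    analyticAt_evalEntries_comp (analyticAt_covPath_apply hnil Ω · · t) q
  rw [← covPath_one]
  exact mem_closure_ne_zero_of_analytic_path zero_lt_one (continuous_covPath hnil Ω).continuousAt
    (fun t ht => covPath_mem_model hΛ hΩ ht) hanalytic (by rwa [covPath_zero])

theorem model_subset_algModel : G.model ⊆ G.algModel := fun S hS _ hp => hp S hS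

variable {G' : MixedGraph V}

theorem algModel_subset_of_model_subset_closure (h : G.model ⊆ closure G'.model) :
    G.algModel ⊆ G'.algModel := by
  intro S hS p hp
  have hcont : Continuous fun T : Matrix V V ℝ => evalEntries T p :=
    (MvPolynomial.continuous_eval p).comp (by fun_prop)
  exact hS p fun T hT => closure_minimal hp (isClosed_eq hcont continuous_const) (h hT)

theorem model_subset_closure_of_algModel_subset (hG : G.Acyclic) (hG' : G'.IsBAP)
    (h : G.algModel ⊆ G'.algModel) : G.model ⊆ closure G'.model := by
  obtain ⟨q, hq, hmem⟩ := exists_denominator_mem_model_of_mem_algModel hG'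
  refine fun S hS => closure_mono ?_ (mem_closure_model_evalEntries_ne_zero hG hq hS)
  rintro T ⟨hT, hqT⟩
  obtain ⟨x, rfl⟩ := (mem_model_iff hG).1 hT
  exact hmem _ (h (model_subset_algModel hT)) (x.cov_posDef hG) hqT

theorem closure_model_subset_iff (hG : G.Acyclic) (hG' : G'.IsBAP) :
    closure G.model ⊆ closure G'.model ↔ G.algModel ⊆ G'.algModel :=
  ⟨fun h => algModel_subset_of_model_subset_closure (subset_closure.trans h), fun h =>
    closure_minimal (model_subset_closure_of_algModel_subset hG hG' h) isClosed_closure⟩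

end MixedGraph

/-- Two BAPs are distributionally equivalent up to closure iff they
are algebraically equivalent. -/
theorem closure_model_eq_iff_algModel_eq
    {V : Type*} [Fintype V] [DecidableEq V]
    (G G' : MixedGraph V) (hG : G.IsBAP) (hG' : G'.IsBAP) :
    closure (G.model) = closure (G'.model) ↔ G.algModel = G'.algModel := by
  simp only [Set.Subset.antisymm_iff, MixedGraph.closure_model_subset_iff hG.1 hG',
    MixedGraph.closure_model_subset_iff hG'.1 hG]
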